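/- Fix L ∈ 𝓛 and a vector μ ∈ ℝⁿ. A matrix Γ̂ ∈ 𝓜_r minimizes, over 𝓜_r, the Kullback–Leibler divergence D_KL( N(μ, Γ_pos) ‖ N(μ, Γ̂) ) between the Gaussian measures N(μ, Γ_pos) and N(μ, Γ̂) on ℝⁿ if and only if Γ̂ minimizes L(Γ_pos, Γ̂) over 𝓜_r; the same equivalence holds with the Kullback–Leibler divergence replaced by the Hellinger distance between N(μ, Γ_pos) and N(μ, Γ̂). -/

import Mathlib

open Matrix MeasureTheory Polynomial Filter Finset

/-- `σ` enumerates (with multiplicity) the generalized eigenvalues of the pencil `(A, B)`,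
i.e. the eigenvalues of `B⁻¹ * A`. -/
def IsGenEigs {n : ℕ} (A B : Matrix (Fin n) (Fin n) ℝ) (σ : Fin n → ℝ) : Prop :=
  (B⁻¹ * A).charpoly = ∏ i : Fin n, (Polynomial.X - Polynomial.C (σ i))

/-- Membership in the class 𝓤. -/
def MemU (f : ℝ → ℝ) : Prop :=
  ∃ f' : ℝ → ℝ,
    (∀ x ∈ Set.Ioi (0:ℝ), HasDerivAt f (f' x) x) ∧
    ContinuousOn f' (Set.Ioi (0:ℝ)) ∧
    (∀ x ∈ Set.Ioi (0:ℝ), x ≠ 1 → f' x * (1 - x) < 0) ∧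
    Filter.Tendsto f Filter.atTop Filter.atTop

/-- The approximation class `𝓜_r`. -/
def MClass {n : ℕ} (Γpr : Matrix (Fin n) (Fin n) ℝ) (r : ℕ) :
    Set (Matrix (Fin n) (Fin n) ℝ) :=
  {M | ∃ K : Matrix (Fin n) (Fin n) ℝ, K.rank ≤ r ∧ M = Γpr - K * Kᵀ ∧ M.PosDef}

/-- The density (w.r.t. Lebesgue measure on `ℝⁿ`) of the Gaussian measure `N(μ, Σ)`. -/
noncomputable def gaussianDensity {n : ℕ} (μ : Fin n → ℝ) (S : Matrix (Fin n) (Fin n) ℝ)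
    (x : Fin n → ℝ) : ℝ :=
  (2 * Real.pi) ^ (-(n : ℝ) / 2) * S.det ^ (-(1:ℝ) / 2) *
    Real.exp (-(1 / 2) * ((x - μ) ⬝ᵥ (S⁻¹ *ᵥ (x - μ))))

/-- The Gaussian probability measure `N(μ, Σ)` on `ℝⁿ`. -/
noncomputable def gaussianMeasure {n : ℕ} (μ : Fin n → ℝ)
    (S : Matrix (Fin n) (Fin n) ℝ) : Measure (Fin n → ℝ) :=
  MeasureTheory.volume.withDensity fun x => ENNReal.ofReal (gaussianDensity μ S x)

/-- Kullback–Leibler divergence `D_KL(μ ‖ ν) = ∫ log (dμ/dν) dμ`. -/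
noncomputable def klDiv' {α : Type*} [MeasurableSpace α] (μ ν : Measure α) : ℝ :=
  ∫ x, Real.log ((μ.rnDeriv ν) x).toReal ∂μ

/-- Squared Hellinger distance between two measures on `ℝⁿ`, via their densities with
respect to the dominating Lebesgue measure. -/
noncomputable def sqHellinger {n : ℕ} (μ ν : Measure (Fin n → ℝ)) : ℝ :=
  (1 / 2) * ∫ x, (Real.sqrt ((μ.rnDeriv MeasureTheory.volume) x).toReal -
    Real.sqrt ((ν.rnDeriv MeasureTheory.volume) x).toReal) ^ 2

/-!
Simultaneous diagonalization `Γpos = T Tᵀ`, `Γ̂ = T diag(σ⁻¹) Tᵀ` turns the Kullback–Leibler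
divergence and `-log (1 - Hellinger²)` into sums `∑ g(σᵢ)` over the generalized eigenvalues of
`(Γpos, Γ̂)`, with `g` strictly decreasing on `(0, 1]` and strictly increasing on `[1, ∞)`, like
every `f ∈ 𝓤`. All such sums have the same minimizers over `𝓜_r`. Indeed, let `l` be the increasing
spectrum of `(Γpos, Γpr)`, which lies in `(0, 1]`. The precisions of `Γpr` and of a member of `𝓜_r`
agree on a subspace of codimension at most `r`, so a dimension count gives `σᵢ ≤ lᵢ₊ᵣ` for the
increasing `σ`. Hence every `σᵢ` is at least as far from `1`, on the same side, as the `i`-th entry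
of `(lᵢ₊ᵣ)` padded with ones. Moving the `r` smallest `lᵢ` to `1` attains that spectrum, so a matrix
is optimal, for whichever `g`, exactly if it has it.
-/

/-- A function on `(0, ∞)` with a strict valley at `1`: the shape shared by the members of `𝓤` and
by the losses `klLoss` and `hellingerLoss` that express the two divergences. -/
structure IsStrictValley (f : ℝ → ℝ) : Prop where
  strictAntiOn : StrictAntiOn f (Set.Ioc 0 1)
  strictMonoOn : StrictMonoOn f (Set.Ici 1)

theorem isStrictValley_of_hasDerivAt {f f' : ℝ → ℝ}
    (hf : ∀ x ∈ Set.Ioi (0 : ℝ), HasDerivAt f (f' x) x)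
    (hf' : ∀ x ∈ Set.Ioi (0 : ℝ), x ≠ 1 → f' x * (1 - x) < 0) : IsStrictValley f where
  strictAntiOn := by
    refine strictAntiOn_of_deriv_neg (convex_Ioc 0 1)
      (fun x hx => (hf x hx.1).continuousAt.continuousWithinAt) fun x hx => ?_
    rw [interior_Ioc] at hx
    rw [(hf x hx.1).deriv]
    exact neg_of_mul_neg_left (hf' x hx.1 hx.2.ne) (sub_nonneg.mpr hx.2.le)
  strictMonoOn := by
    have pos_of_one_le {x : ℝ} (hx : 1 ≤ x) : 0 < x := one_pos.trans_le hx
    refine strictMonoOn_of_deriv_pos (convex_Ici 1)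
      (fun x hx => (hf x (pos_of_one_le hx)).continuousAt.continuousWithinAt) fun x hx => ?_
    rw [interior_Ici, Set.mem_Ioi] at hx
    rw [(hf x (pos_of_one_le hx.le)).deriv]
    exact pos_of_mul_neg_left (hf' x (pos_of_one_le hx.le) hx.ne') (sub_nonpos.mpr hx.le)

theorem MemU.isStrictValley {f : ℝ → ℝ} (hf : MemU f) : IsStrictValley f := by
  obtain ⟨f', hderiv, -, hsign, -⟩ := hf
  exact isStrictValley_of_hasDerivAt hderiv hsign

namespace IsStrictValley

variable {f : ℝ → ℝ} {ι : Type*} [Fintype ι] {σ τ : ι → ℝ}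

theorem lt_of_mem_uIcc (hf : IsStrictValley f) {x t : ℝ} (hx : 0 < x) (ht : t ∈ Set.uIcc x 1)
    (hxt : x ≠ t) : f t < f x := by
  rcases Set.mem_uIcc.mp ht with ⟨hle, ht1⟩ | ⟨h1t, hle⟩
  · exact hf.strictAntiOn ⟨hx, hle.trans ht1⟩ ⟨hx.trans_le hle, ht1⟩ (hle.lt_of_ne hxt)
  · exact hf.strictMonoOn h1t (h1t.trans hle) (hle.lt_of_ne hxt.symm)

theorem le_of_mem_uIcc (hf : IsStrictValley f) {x t : ℝ} (hx : 0 < x) (ht : t ∈ Set.uIcc x 1) :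
    f t ≤ f x := by
  rcases eq_or_ne x t with rfl | hxt
  · exact le_rfl
  · exact (hf.lt_of_mem_uIcc hx ht hxt).le

theorem sum_le_sum (hf : IsStrictValley f) (hσ : ∀ i, 0 < σ i)
    (hτ : ∀ i, τ i ∈ Set.uIcc (σ i) 1) : ∑ i, f (τ i) ≤ ∑ i, f (σ i) :=
  Finset.sum_le_sum fun i _ => hf.le_of_mem_uIcc (hσ i) (hτ i)

theorem eq_of_sum_le_sum (hf : IsStrictValley f) (hσ : ∀ i, 0 < σ i)
    (hτ : ∀ i, τ i ∈ Set.uIcc (σ i) 1) (hle : ∑ i, f (σ i) ≤ ∑ i, f (τ i)) : σ = τ := by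
  by_contra hne
  obtain ⟨i, hi⟩ := Function.ne_iff.mp hne
  exact hle.not_gt <| Finset.sum_lt_sum (fun j _ => hf.le_of_mem_uIcc (hσ j) (hτ j))
    ⟨i, Finset.mem_univ i, hf.lt_of_mem_uIcc (hσ i) (hτ i) hi⟩

end IsStrictValley

/-- The loss `L(A, B) = ∑ᵢ f(σᵢ)` of the class `𝓛`, as a sum over the roots (with multiplicity) of
the characteristic polynomial of `B⁻¹ * A`, so that no enumeration `σ` has to be chosen; for
positive definite `A`, `B` all roots are real. -/
noncomputable def spectralLoss {n : ℕ} (f : ℝ → ℝ) (A B : Matrix (Fin n) (Fin n) ℝ) : ℝ :=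
  ((B⁻¹ * A).charpoly.roots.map f).sum

theorem IsGenEigs.spectralLoss_eq {n : ℕ} {A B : Matrix (Fin n) (Fin n) ℝ} {σ : Fin n → ℝ}
    (h : IsGenEigs A B σ) (f : ℝ → ℝ) : spectralLoss f A B = ∑ i, f (σ i) := by
  have hroots : (B⁻¹ * A).charpoly.roots = Finset.univ.val.map σ := by
    rw [h, ← Polynomial.roots_multiset_prod_X_sub_C (Finset.univ.val.map σ), Multiset.map_map]
    rfl
  rw [spectralLoss, hroots, Multiset.map_map]
  rfl

theorem exists_ne_zero_mulVec_eq_zero {K m₁ m₂ m₃ ι : Type*} [Field K] [Fintype ι]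
    (M₁ : Matrix m₁ ι K) (M₂ : Matrix m₂ ι K) (M₃ : Matrix m₃ ι K) (I : Finset m₁)
    (J : Finset m₂) (h : #I + #J + M₃.rank < Fintype.card ι) :
    ∃ w ≠ 0, (∀ i ∈ I, (M₁ *ᵥ w) i = 0) ∧ (∀ j ∈ J, (M₂ *ᵥ w) j = 0) ∧ M₃ *ᵥ w = 0 := by
  let constraints : (ι → K) →ₗ[K] ((I → K) × (J → K)) × LinearMap.range M₃.mulVecLin :=
    ((LinearMap.funLeft K K Subtype.val ∘ₗ M₁.mulVecLin).prod
      (LinearMap.funLeft K K Subtype.val ∘ₗ M₂.mulVecLin)).prod M₃.mulVecLin.rangeRestrict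
  have hker : LinearMap.ker constraints ≠ ⊥ := by
    apply LinearMap.ker_ne_bot_of_finrank_lt
    simpa only [Module.finrank_prod, Module.finrank_fintype_fun_eq_card, Fintype.card_coe,
      ← Matrix.rank.eq_1] using h
  obtain ⟨w, hw, hw0⟩ := (Submodule.ne_bot_iff _).mp hker
  have hL : constraints w = 0 := hw
  exact ⟨w, hw0, fun i hi => congrFun (congrArg (·.1.1) hL) ⟨i, hi⟩,
    fun j hj => congrFun (congrArg (·.1.2) hL) ⟨j, hj⟩, congrArg (·.2.1) hL⟩

/-- Simultaneous diagonalization by congruence of a positive definite pair `(A, B)`. The inverse on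
`σ` makes it the spectrum of `B⁻¹ * A`. -/
structure SimDiag {ι : Type*} [Fintype ι] [DecidableEq ι] (A B T : Matrix ι ι ℝ) (σ : ι → ℝ) :
    Prop where
  isUnit_det : IsUnit T.det
  pos : ∀ i, 0 < σ i
  left_eq : A = T * Tᵀ
  right_eq : B = T * diagonal σ⁻¹ * Tᵀ

section LinearAlgebra

variable {ι : Type*} [Fintype ι] [DecidableEq ι]

open scoped MatrixOrder Matrix.Norms.L2Operator in
theorem exists_isUnit_det_eq_mul_transpose {A : Matrix ι ι ℝ} (hA : A.PosDef) :
    ∃ C : Matrix ι ι ℝ, IsUnit C.det ∧ A = C * Cᵀ := by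
  obtain ⟨R, hR, hAR⟩ := CStarAlgebra.isStrictlyPositive_iff_eq_star_mul_self.mp
    hA.isStrictlyPositive
  exact ⟨Rᵀ, by rwa [det_transpose, ← isUnit_iff_isUnit_det],
    by rw [hAR, transpose_transpose, star_eq_conjTranspose, conjTranspose_eq_transpose_of_trivial]⟩

theorem exists_eq_mul_diagonal_mul_transpose {M : Matrix ι ι ℝ} (hM : M.PosDef) :
    ∃ (V : Matrix ι ι ℝ) (d : ι → ℝ),
      V * Vᵀ = 1 ∧ (∀ i, 0 < d i) ∧ M = V * diagonal d * Vᵀ := by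
  refine ⟨hM.1.eigenvectorUnitary, hM.1.eigenvalues, ?_, hM.eigenvalues_pos, ?_⟩
  · simpa only [Unitary.coe_star, star_eq_conjTranspose, conjTranspose_eq_transpose_of_trivial]
      using Unitary.coe_mul_star_self hM.1.eigenvectorUnitary
  · simpa only [Unitary.conjStarAlgAut_apply, Unitary.coe_star, star_eq_conjTranspose,
      conjTranspose_eq_transpose_of_trivial, RCLike.ofReal_real_eq_id, Function.id_comp] using
      hM.1.spectral_theorem

theorem exists_simDiag {A B : Matrix ι ι ℝ} (hA : A.PosDef) (hB : B.PosDef) :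
    ∃ T σ, SimDiag A B T σ := by
  obtain ⟨C, hC, rfl⟩ := exists_isUnit_det_eq_mul_transpose hA
  have hM : (C⁻¹ * B * C⁻¹ᵀ).PosDef := by
    have hC' : IsUnit C⁻¹ := (isUnit_iff_isUnit_det _).mpr (isUnit_nonsing_inv_det C hC)
    simpa only [star_eq_conjTranspose, conjTranspose_eq_transpose_of_trivial] using
      hC'.posDef_star_right_conjugate_iff.mpr hB
  obtain ⟨V, d, hV, hd, hMV⟩ := exists_eq_mul_diagonal_mul_transpose hM
  refine ⟨C * V, d⁻¹, ?_, fun i => inv_pos.mpr (hd i), ?_, ?_⟩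
  · rw [det_mul]
    exact hC.mul (isUnit_det_of_right_inverse hV)
  · rw [transpose_mul, Matrix.mul_assoc, ← Matrix.mul_assoc V, hV, Matrix.one_mul]
  · calc B = (C * C⁻¹) * B * (C * C⁻¹)ᵀ := by
          rw [mul_nonsing_inv _ hC, transpose_one, Matrix.one_mul, Matrix.mul_one]
      _ = C * (C⁻¹ * B * C⁻¹ᵀ) * Cᵀ := by simp only [transpose_mul, Matrix.mul_assoc]
      _ = C * V * diagonal d⁻¹⁻¹ * (C * V)ᵀ := by
          rw [hMV, inv_inv, transpose_mul]
          simp only [Matrix.mul_assoc]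

theorem SimDiag.reindex {A B T : Matrix ι ι ℝ} {σ : ι → ℝ} (h : SimDiag A B T σ)
    (e : Equiv.Perm ι) : SimDiag A B (T.submatrix id e) (σ ∘ e) where
  isUnit_det := by
    rw [← isUnit_iff_isUnit_det, ← Equiv.coe_refl, isUnit_submatrix_equiv,
      isUnit_iff_isUnit_det]
    exact h.isUnit_det
  pos i := h.pos (e i)
  left_eq := by
    rw [transpose_submatrix, submatrix_mul_equiv, submatrix_id_id, h.left_eq]
  right_eq := by
    rw [transpose_submatrix, show (σ ∘ e)⁻¹ = σ⁻¹ ∘ e from rfl, ← submatrix_diagonal_equiv,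
      submatrix_mul_equiv, submatrix_mul_equiv, submatrix_id_id, h.right_eq]

theorem exists_simDiag_monotone {n : ℕ} {A B : Matrix (Fin n) (Fin n) ℝ} (hA : A.PosDef)
    (hB : B.PosDef) : ∃ T σ, SimDiag A B T σ ∧ Monotone σ := by
  obtain ⟨T, σ, h⟩ := exists_simDiag hA hB
  exact ⟨_, _, h.reindex (Tuple.sort σ), Tuple.monotone_sort σ⟩

theorem simDiag_self {T : Matrix ι ι ℝ} (hT : IsUnit T.det) : SimDiag (T * Tᵀ) (T * Tᵀ) T 1 where
  isUnit_det := hT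
  pos _ := one_pos
  left_eq := rfl
  right_eq := by rw [inv_one, diagonal_one', Matrix.mul_one]

namespace SimDiag

variable {A B T : Matrix ι ι ℝ} {σ : ι → ℝ}

theorem posDef_right (h : SimDiag A B T σ) : B.PosDef := by
  have hT : IsUnit T := (isUnit_iff_isUnit_det T).mpr h.isUnit_det
  rw [h.right_eq, ← conjTranspose_eq_transpose_of_trivial, ← star_eq_conjTranspose,
    hT.posDef_star_right_conjugate_iff]
  exact PosDef.diagonal fun i => inv_pos.mpr (h.pos i)

theorem left (h : SimDiag A B T σ) : SimDiag A A T 1 :=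
  h.left_eq ▸ simDiag_self h.isUnit_det

theorem det_right (h : SimDiag A B T σ) : B.det = A.det / ∏ i, σ i := by
  simp only [h.right_eq, h.left_eq, det_mul, det_transpose, det_diagonal, Pi.inv_apply,
    Finset.prod_inv_distrib]
  ring

theorem inv_right (h : SimDiag A B T σ) : B⁻¹ = T⁻¹ᵀ * diagonal σ * T⁻¹ := by
  have hdiag : (diagonal σ⁻¹)⁻¹ = diagonal σ := by
    refine inv_eq_right_inv ?_
    rw [diagonal_mul_diagonal, ← diagonal_one]
    exact congrArg diagonal (funext fun i => inv_mul_cancel₀ (h.pos i).ne')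
  rw [h.right_eq, Matrix.mul_inv_rev, Matrix.mul_inv_rev, hdiag, transpose_nonsing_inv,
    Matrix.mul_assoc]

theorem dotProduct_inv_right_mulVec (h : SimDiag A B T σ) (w : ι → ℝ) :
    w ⬝ᵥ (B⁻¹ *ᵥ w) = ∑ i, σ i * (T⁻¹ *ᵥ w) i ^ 2 := by
  rw [h.inv_right, ← mulVec_mulVec, ← mulVec_mulVec, dotProduct_mulVec, vecMul_transpose]
  simp only [dotProduct, mulVec_diagonal]
  exact Finset.sum_congr rfl fun i _ => by ring

theorem dotProduct_inv_left_mulVec (h : SimDiag A B T σ) (w : ι → ℝ) :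
    w ⬝ᵥ (A⁻¹ *ᵥ w) = ∑ i, (T⁻¹ *ᵥ w) i ^ 2 := by
  simpa only [Pi.one_apply, one_mul] using h.left.dotProduct_inv_right_mulVec w

theorem inv_mulVec_mulVec (h : SimDiag A B T σ) (z : ι → ℝ) : T⁻¹ *ᵥ (T *ᵥ z) = z := by
  rw [mulVec_mulVec, nonsing_inv_mul _ h.isUnit_det, one_mulVec]

theorem le_one (h : SimDiag A B T σ) (hAB : (A⁻¹ - B⁻¹).PosSemidef) (i : ι) : σ i ≤ 1 := by
  have hquad := hAB.dotProduct_mulVec_nonneg (T *ᵥ Pi.single i 1)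
  rw [star_trivial, sub_mulVec, dotProduct_sub, h.dotProduct_inv_right_mulVec,
    h.dotProduct_inv_left_mulVec, h.inv_mulVec_mulVec] at hquad
  simpa [Pi.single_apply] using hquad

theorem isGenEigs {n : ℕ} {A B T : Matrix (Fin n) (Fin n) ℝ} {σ : Fin n → ℝ}
    (h : SimDiag A B T σ) : IsGenEigs A B σ := by
  have hsimilar : B⁻¹ * A = T⁻¹ᵀ * (diagonal σ * Tᵀ) := by
    rw [h.inv_right, h.left_eq, Matrix.mul_assoc, nonsing_inv_mul_cancel_left _ _ h.isUnit_det,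
      Matrix.mul_assoc]
  rw [IsGenEigs, hsimilar, charpoly_mul_comm, Matrix.mul_assoc, ← transpose_mul,
    nonsing_inv_mul _ h.isUnit_det, transpose_one, Matrix.mul_one, charpoly_diagonal]

theorem mul_dotProduct_inv_le_of_forall_lt [LinearOrder ι] (h : SimDiag A B T σ)
    (hσ : Monotone σ) {k : ι} {w : ι → ℝ} (hw : ∀ j < k, (T⁻¹ *ᵥ w) j = 0) :
    σ k * (w ⬝ᵥ (A⁻¹ *ᵥ w)) ≤ w ⬝ᵥ (B⁻¹ *ᵥ w) := by
  rw [h.dotProduct_inv_left_mulVec, h.dotProduct_inv_right_mulVec, Finset.mul_sum]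
  refine Finset.sum_le_sum fun j _ => ?_
  rcases lt_or_ge j k with hjk | hkj
  · simp [hw j hjk]
  · exact mul_le_mul_of_nonneg_right (hσ hkj) (sq_nonneg _)

theorem dotProduct_inv_le_mul_of_forall_gt [LinearOrder ι] (h : SimDiag A B T σ)
    (hσ : Monotone σ) {k : ι} {w : ι → ℝ} (hw : ∀ j, k < j → (T⁻¹ *ᵥ w) j = 0) :
    w ⬝ᵥ (B⁻¹ *ᵥ w) ≤ σ k * (w ⬝ᵥ (A⁻¹ *ᵥ w)) := by
  rw [h.dotProduct_inv_left_mulVec, h.dotProduct_inv_right_mulVec, Finset.mul_sum]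
  refine Finset.sum_le_sum fun j _ => ?_
  rcases lt_or_ge k j with hkj | hjk
  · simp [hw j hkj]
  · exact mul_le_mul_of_nonneg_right (hσ hjk) (sq_nonneg _)

end SimDiag

theorem SimDiag.le_of_rank_sub_le {n r : ℕ} {A B P S T : Matrix (Fin n) (Fin n) ℝ}
    {σ l : Fin n → ℝ} (hB : SimDiag A B S σ) (hP : SimDiag A P T l) (hσ : Monotone σ)
    (hl : Monotone l) (hr : (P - B).rank ≤ r) (i : Fin n) (hi : i + r < n) :
    σ i ≤ l ⟨i + r, hi⟩ := by
  have hrank : (B⁻¹ - P⁻¹).rank ≤ r := by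
    rw [inv_sub_inv (iff_of_true hB.posDef_right.isUnit hP.posDef_right.isUnit)]
    exact (rank_mul_le_left _ _).trans ((rank_mul_le_right _ _).trans hr)
  obtain ⟨w, hw0, hwS, hwT, hwBP⟩ := exists_ne_zero_mulVec_eq_zero S⁻¹ T⁻¹ (B⁻¹ - P⁻¹)
    (Finset.Iio i) (Finset.Ioi ⟨i + r, hi⟩) (by simp; omega)
  rw [sub_mulVec, sub_eq_zero] at hwBP
  have hApos : 0 < w ⬝ᵥ (A⁻¹ *ᵥ w) := by
    simpa only [star_trivial] using hB.left.posDef_right.inv.dotProduct_mulVec_pos hw0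
  refine le_of_mul_le_mul_right ?_ hApos
  calc σ i * (w ⬝ᵥ (A⁻¹ *ᵥ w))
      ≤ w ⬝ᵥ (B⁻¹ *ᵥ w) := hB.mul_dotProduct_inv_le_of_forall_lt hσ fun j hj =>
        hwS j (Finset.mem_Iio.mpr hj)
    _ = w ⬝ᵥ (P⁻¹ *ᵥ w) := by rw [hwBP]
    _ ≤ l ⟨i + r, hi⟩ * (w ⬝ᵥ (A⁻¹ *ᵥ w)) := hP.dotProduct_inv_le_mul_of_forall_gt hl fun j hj =>
        hwT j (Finset.mem_Ioi.mpr hj)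

end LinearAlgebra

section Optimum

variable {n r : ℕ} {A P T : Matrix (Fin n) (Fin n) ℝ} {l : Fin n → ℝ}

theorem SimDiag.exists_mem_MClass_piecewise_one (h : SimDiag A P T l) (hl : ∀ i, l i ≤ 1)
    (I : Finset (Fin n)) (hI : #I ≤ r) :
    ∃ B ∈ MClass P r, SimDiag A B T (I.piecewise 1 l) := by
  set k : Fin n → ℝ := I.piecewise (fun i => √((l i)⁻¹ - 1)) 0 with hk
  have hpos (i : Fin n) : 0 < I.piecewise 1 l i := by
    by_cases hi : i ∈ I
    · simp only [hi, Finset.piecewise_eq_of_mem, Pi.one_apply, one_pos]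
    · simpa only [hi, not_false_eq_true, Finset.piecewise_eq_of_notMem] using h.pos i
  have hB : SimDiag A (T * diagonal (I.piecewise 1 l)⁻¹ * Tᵀ) T (I.piecewise 1 l) :=
    ⟨h.isUnit_det, hpos, h.left_eq, rfl⟩
  refine ⟨_, ⟨T * diagonal k, ?_, ?_, hB.posDef_right⟩, hB⟩
  · have hsupp : {i | k i ≠ 0} ⊆ (I : Set (Fin n)) := fun i hi => by
      by_contra hiI
      exact hi (I.piecewise_eq_of_notMem _ _ hiI)
    refine (rank_mul_le_right _ _).trans ?_
    rw [rank_diagonal]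
    refine le_trans ?_ hI
    rw [← Fintype.card_coe]
    exact Fintype.card_le_of_injective _ (Set.inclusion_injective hsupp)
  · have hdiag : (I.piecewise 1 l)⁻¹ + k * k = l⁻¹ := by
      funext i
      by_cases hi : i ∈ I
      · have hnonneg : 0 ≤ (l i)⁻¹ - 1 := sub_nonneg.mpr ((one_le_inv₀ (h.pos i)).mpr (hl i))
        simp [hk, hi, Real.mul_self_sqrt hnonneg]
      · simp [hk, hi]
    have hdiag' : diagonal (I.piecewise 1 l)⁻¹ + diagonal k * diagonal k = diagonal l⁻¹ := by
      rw [diagonal_mul_diagonal, diagonal_add, ← hdiag]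
      rfl
    rw [eq_sub_iff_add_eq, h.right_eq, ← hdiag', transpose_mul, diagonal_transpose]
    noncomm_ring

/-- The spectrum of the optimal approximation: the `r` smallest entries of the increasing sequence
`l` are replaced by `1`, and the remaining ones are listed first. -/
noncomputable def optimalSpectrum {n : ℕ} (r : ℕ) (l : Fin n → ℝ) (i : Fin n) : ℝ :=
  if h : i + r < n then l ⟨i + r, h⟩ else 1

theorem exists_perm_eq_add (n r : ℕ) :
    ∃ e : Equiv.Perm (Fin n), ∀ (i : Fin n) (hi : i + r < n), e i = ⟨i + r, hi⟩ := by
  rcases Nat.eq_zero_or_pos n with rfl | hn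
  · exact ⟨Equiv.refl _, fun i => i.elim0⟩
  · have : NeZero n := ⟨hn.ne'⟩
    refine ⟨Equiv.addRight (Fin.ofNat n r), fun i hi => Fin.ext ?_⟩
    rw [Equiv.coe_addRight, Fin.val_add, Fin.val_ofNat, Nat.add_mod_mod, Nat.mod_eq_of_lt hi]

theorem SimDiag.exists_mem_MClass_optimalSpectrum (h : SimDiag A P T l) (hl : ∀ i, l i ≤ 1)
    (r : ℕ) : ∃ B ∈ MClass P r, IsGenEigs A B (optimalSpectrum r l) := by
  obtain ⟨e, he⟩ := exists_perm_eq_add n r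
  set I : Finset (Fin n) := {i | n ≤ i + r} with hI
  have hcard : #I ≤ r := by
    rw [← Finset.card_range r]
    refine Finset.card_le_card_of_injOn (fun i => i + r - n) (fun i hi => ?_)
      fun i hi j hj hij => ?_
    · simp only [hI, Finset.coe_filter, Finset.mem_univ, true_and, Set.mem_ofPred_eq] at hi
      simp only [Finset.coe_range, Set.mem_Iio]
      omega
    · simp only [hI, Finset.coe_filter, Finset.mem_univ, true_and, Set.mem_ofPred_eq] at hi hj hij
      omega
  obtain ⟨B, hB, hAB⟩ :=
    (h.reindex e).exists_mem_MClass_piecewise_one (fun i => hl (e i)) I hcard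
  have hspec : I.piecewise 1 (l ∘ e) = optimalSpectrum r l := by
    funext i
    by_cases hi : i + r < n
    · simp [optimalSpectrum, hI, hi, he i hi]
    · simp [optimalSpectrum, hI, hi, not_lt.mp hi]
  exact ⟨B, hB, hspec ▸ hAB.isGenEigs⟩

theorem posDef_of_mem_MClass {B : Matrix (Fin n) (Fin n) ℝ} (hB : B ∈ MClass P r) : B.PosDef := by
  obtain ⟨-, -, -, h⟩ := hB
  exact h

theorem rank_sub_le_of_mem_MClass {B : Matrix (Fin n) (Fin n) ℝ} (hB : B ∈ MClass P r) :
    (P - B).rank ≤ r := by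
  obtain ⟨K, hK, rfl, -⟩ := hB
  rw [sub_sub_cancel]
  exact (rank_mul_le_left K Kᵀ).trans hK

theorem exists_isGenEigs_forall_mem_uIcc (hA : A.PosDef) (hP : P.PosDef)
    (hAP : (A⁻¹ - P⁻¹).PosSemidef) (r : ℕ) :
    ∃ τ : Fin n → ℝ, (∃ B ∈ MClass P r, IsGenEigs A B τ) ∧
      ∀ B ∈ MClass P r, ∃ σ, IsGenEigs A B σ ∧ (∀ i, 0 < σ i) ∧ ∀ i, τ i ∈ Set.uIcc (σ i) 1 := by
  obtain ⟨T, l, hT, hl⟩ := exists_simDiag_monotone hA hP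
  have hl1 := hT.le_one hAP
  refine ⟨optimalSpectrum r l, hT.exists_mem_MClass_optimalSpectrum hl1 r, fun B hB => ?_⟩
  obtain ⟨S, σ, hS, hσ⟩ := exists_simDiag_monotone hA (posDef_of_mem_MClass hB)
  refine ⟨σ, hS.isGenEigs, hS.pos, fun i => ?_⟩
  rw [optimalSpectrum]
  split_ifs with hi
  · have hle := hS.le_of_rank_sub_le hT hσ hl (rank_sub_le_of_mem_MClass hB) i hi
    exact Set.mem_uIcc_of_le hle (hl1 _)
  · exact Set.right_mem_uIcc

theorem IsStrictValley.isMinOn_spectralLoss_iff {f : ℝ → ℝ} (hf : IsStrictValley f)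
    {τ : Fin n → ℝ} {M : Set (Matrix (Fin n) (Fin n) ℝ)} (hτ : ∃ B ∈ M, IsGenEigs A B τ)
    (hM : ∀ B ∈ M, ∃ σ, IsGenEigs A B σ ∧ (∀ i, 0 < σ i) ∧ ∀ i, τ i ∈ Set.uIcc (σ i) 1)
    {B : Matrix (Fin n) (Fin n) ℝ} (hB : B ∈ M) :
    IsMinOn (spectralLoss f A) M B ↔ IsGenEigs A B τ := by
  constructor
  · intro hmin
    obtain ⟨B₀, hB₀, hτB₀⟩ := hτ
    obtain ⟨σ, hσ, hpos, hmem⟩ := hM B hB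
    have hle : spectralLoss f A B ≤ spectralLoss f A B₀ := hmin hB₀
    rw [hσ.spectralLoss_eq, hτB₀.spectralLoss_eq] at hle
    rwa [← hf.eq_of_sum_le_sum hpos hmem hle]
  · intro hτB
    refine isMinOn_iff.mpr fun C hC => ?_
    obtain ⟨σ, hσ, hpos, hmem⟩ := hM C hC
    rw [hτB.spectralLoss_eq, hσ.spectralLoss_eq]
    exact hf.sum_le_sum hpos hmem

theorem isMinOn_spectralLoss_congr (hA : A.PosDef) (hP : P.PosDef)
    (hAP : (A⁻¹ - P⁻¹).PosSemidef) {f g : ℝ → ℝ} (hf : IsStrictValley f) (hg : IsStrictValley g)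
    {B : Matrix (Fin n) (Fin n) ℝ} (hB : B ∈ MClass P r) :
    IsMinOn (spectralLoss f A) (MClass P r) B ↔ IsMinOn (spectralLoss g A) (MClass P r) B := by
  obtain ⟨τ, hτ, hM⟩ := exists_isGenEigs_forall_mem_uIcc hA hP hAP r
  rw [hf.isMinOn_spectralLoss_iff hτ hM hB, hg.isMinOn_spectralLoss_iff hτ hM hB]

theorem isMinOn_spectralLoss_iff_forall_isGenEigs (hA : A.PosDef) (f : ℝ → ℝ)
    {B : Matrix (Fin n) (Fin n) ℝ} (hB : B ∈ MClass P r) :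
    IsMinOn (spectralLoss f A) (MClass P r) B ↔
      ∀ C ∈ MClass P r, ∀ σ σ' : Fin n → ℝ, IsGenEigs A B σ → IsGenEigs A C σ' →
        ∑ i, f (σ i) ≤ ∑ i, f (σ' i) := by
  rw [isMinOn_iff]
  refine forall₂_congr fun C hC => ⟨fun hle σ σ' hσ hσ' => ?_, fun hle => ?_⟩
  · rwa [← hσ.spectralLoss_eq, ← hσ'.spectralLoss_eq]
  · obtain ⟨S, σ, hS⟩ := exists_simDiag hA (posDef_of_mem_MClass hB)
    obtain ⟨S', σ', hS'⟩ := exists_simDiag hA (posDef_of_mem_MClass hC)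
    rw [hS.isGenEigs.spectralLoss_eq, hS'.isGenEigs.spectralLoss_eq]
    exact hle σ σ' hS.isGenEigs hS'.isGenEigs

end Optimum

section Measure

open ProbabilityTheory

theorem map_withDensity_comp {α β : Type*} [MeasurableSpace α] [MeasurableSpace β]
    (ν : Measure α) {e : α → β} (he : Measurable e) {g : β → ENNReal} (hg : Measurable g) :
    (ν.withDensity (g ∘ e)).map e = (ν.map e).withDensity g := by
  ext s hs
  rw [Measure.map_apply he hs, withDensity_apply _ (he hs), withDensity_apply _ hs,
    setLIntegral_map hs hg he]
  rfl

theorem pi_withDensity_ofReal {ι : Type*} [Fintype ι] {E : ι → Type*}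
    [∀ i, MeasurableSpace (E i)] (ν : ∀ i, Measure (E i)) [∀ i, SigmaFinite (ν i)]
    {p : ∀ i, E i → ℝ} (hp : ∀ i x, 0 ≤ p i x) (hpν : ∀ i, Integrable (p i) (ν i)) :
    Measure.pi (fun i => (ν i).withDensity fun x => ENNReal.ofReal (p i x)) =
      (Measure.pi ν).withDensity fun x => ENNReal.ofReal (∏ i, p i (x i)) := by
  have (i : ι) : IsFiniteMeasure ((ν i).withDensity fun x => ENNReal.ofReal (p i x)) :=
    isFiniteMeasure_withDensity_ofReal (hpν i).2
  refine Measure.pi_eq fun s hs => ?_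
  have hint (i : ι) : Integrable (p i) ((ν i).restrict (s i)) := (hpν i).restrict
  rw [withDensity_apply _ (.univ_pi hs), Measure.restrict_pi_pi,
    ← ofReal_integral_eq_lintegral_ofReal (.fintype_prod_dep hint)
      (ae_of_all _ fun x => Finset.prod_nonneg fun i _ => hp i (x i)),
    integral_fintype_prod_eq_prod,
    ENNReal.ofReal_prod_of_nonneg fun i _ => integral_nonneg (hp i)]
  refine Finset.prod_congr rfl fun i _ => ?_
  rw [withDensity_apply _ (hs i),
    ofReal_integral_eq_lintegral_ofReal (hint i) (ae_of_all _ (hp i))]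

theorem map_mulVec_add_volume {ι : Type*} [Fintype ι] [DecidableEq ι] {T : Matrix ι ι ℝ}
    (hT : T.det ≠ 0) (μ : ι → ℝ) :
    (volume : Measure (ι → ℝ)).map (fun z => T *ᵥ z + μ) = ENNReal.ofReal |T.det⁻¹| • volume := by
  rw [show (fun z => T *ᵥ z + μ) = (· + μ) ∘ toLin' T from rfl,
    ← Measure.map_map (measurable_add_const μ) (by fun_prop),
    Real.map_matrix_volume_pi_eq_smul_volume_pi hT, Measure.map_smul, map_add_right_eq_self]

section PositiveDensities

variable {α : Type*} [MeasurableSpace α] {ν : Measure α} {p q : α → ℝ}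

theorem klDiv'_withDensity_ofReal [SigmaFinite ν] (hp : Measurable p) (hq : Measurable q)
    (hp0 : ∀ x, 0 < p x) (hq0 : ∀ x, 0 < q x) :
    klDiv' (ν.withDensity fun x => ENNReal.ofReal (p x))
        (ν.withDensity fun x => ENNReal.ofReal (q x)) =
      ∫ x, Real.log (p x / q x) ∂ν.withDensity fun x => ENNReal.ofReal (p x) := by
  refine integral_congr_ae ((withDensity_absolutelyContinuous ν _).ae_le ?_)
  filter_upwards [Measure.rnDeriv_withDensity ν hp.ennreal_ofReal,
    Measure.rnDeriv_withDensity_right (ν.withDensity fun x => ENNReal.ofReal (p x)) ν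
      hq.ennreal_ofReal.aemeasurable (ae_of_all _ fun x => (ENNReal.ofReal_pos.mpr (hq0 x)).ne')
      (ae_of_all _ fun x => ENNReal.ofReal_ne_top)] with x hpx hqx
  rw [hqx, hpx, ENNReal.toReal_mul, ENNReal.toReal_inv, ENNReal.toReal_ofReal (hp0 x).le,
    ENNReal.toReal_ofReal (hq0 x).le, div_eq_inv_mul]

theorem integrable_of_isFiniteMeasure_withDensity_ofReal (hp : Measurable p) (hp0 : ∀ x, 0 ≤ p x)
    [IsFiniteMeasure (ν.withDensity fun x => ENNReal.ofReal (p x))] : Integrable p ν := by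
  rw [← lintegral_ofReal_ne_top_iff_integrable hp.aestronglyMeasurable (ae_of_all _ hp0),
    ← setLIntegral_univ, ← withDensity_apply _ .univ]
  exact measure_ne_top _ _

theorem integral_eq_one_of_isProbabilityMeasure_withDensity_ofReal (hp : Measurable p)
    (hp0 : ∀ x, 0 ≤ p x) [IsProbabilityMeasure (ν.withDensity fun x => ENNReal.ofReal (p x))] :
    ∫ x, p x ∂ν = 1 := by
  rw [integral_eq_lintegral_of_nonneg_ae (ae_of_all _ hp0) hp.aestronglyMeasurable,
    ← setLIntegral_univ, ← withDensity_apply _ .univ, measure_univ, ENNReal.toReal_one]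

end PositiveDensities

theorem sqHellinger_withDensity_ofReal {n : ℕ} {p q : (Fin n → ℝ) → ℝ} (hp : Measurable p)
    (hq : Measurable q) (hp0 : ∀ x, 0 < p x) (hq0 : ∀ x, 0 < q x)
    [IsProbabilityMeasure (volume.withDensity fun x => ENNReal.ofReal (p x))]
    [IsProbabilityMeasure (volume.withDensity fun x => ENNReal.ofReal (q x))] :
    sqHellinger (volume.withDensity fun x => ENNReal.ofReal (p x))
        (volume.withDensity fun x => ENNReal.ofReal (q x)) =
      1 - ∫ x, √(q x / p x) ∂volume.withDensity fun x => ENNReal.ofReal (p x) := by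
  have hpI : Integrable p :=
    integrable_of_isFiniteMeasure_withDensity_ofReal hp fun x => (hp0 x).le
  have hqI : Integrable q :=
    integrable_of_isFiniteMeasure_withDensity_ofReal hq fun x => (hq0 x).le
  have hsumI : Integrable fun x => p x + q x := hpI.add hqI
  have hpqI : Integrable (fun x => √(p x) * √(q x)) := by
    refine hsumI.mono' (hp.sqrt.mul hq.sqrt).aestronglyMeasurable (ae_of_all _ fun x => ?_)
    rw [Real.norm_of_nonneg (by positivity)]
    nlinarith [sq_nonneg (√(p x) - √(q x)), Real.sq_sqrt (hp0 x).le, Real.sq_sqrt (hq0 x).le]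
  have hsq (x : Fin n → ℝ) :
      (√(p x) - √(q x)) ^ 2 = p x + q x - 2 * (√(p x) * √(q x)) := by
    rw [sub_sq, Real.sq_sqrt (hp0 x).le, Real.sq_sqrt (hq0 x).le]
    ring
  have haffinity : ∫ x, √(q x / p x) ∂volume.withDensity (fun x => ENNReal.ofReal (p x)) =
      ∫ x, √(p x) * √(q x) := by
    rw [integral_withDensity_eq_integral_toReal_smul hp.ennreal_ofReal
      (ae_of_all _ fun x => ENNReal.ofReal_lt_top)]
    refine integral_congr_ae (ae_of_all _ fun x => ?_)
    simp only [ENNReal.toReal_ofReal (hp0 x).le, smul_eq_mul, Real.sqrt_div (hq0 x).le]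
    rw [mul_div_left_comm, Real.div_sqrt, mul_comm]
  have hdensity : ∫ x, (√((volume.withDensity fun x => ENNReal.ofReal (p x)).rnDeriv
        volume x).toReal - √((volume.withDensity fun x => ENNReal.ofReal (q x)).rnDeriv
        volume x).toReal) ^ 2 = ∫ x, (p x + q x - 2 * (√(p x) * √(q x))) := by
    refine integral_congr_ae ?_
    filter_upwards [Measure.rnDeriv_withDensity volume hp.ennreal_ofReal,
      Measure.rnDeriv_withDensity volume hq.ennreal_ofReal] with x hpx hqx
    rw [hpx, hqx, ENNReal.toReal_ofReal (hp0 x).le, ENNReal.toReal_ofReal (hq0 x).le, hsq]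
  rw [sqHellinger, hdensity, haffinity, integral_sub hsumI (hpqI.const_mul 2),
    integral_add hpI hqI, integral_const_mul,
    integral_eq_one_of_isProbabilityMeasure_withDensity_ofReal hp fun x => (hp0 x).le,
    integral_eq_one_of_isProbabilityMeasure_withDensity_ofReal hq fun x => (hq0 x).le]
  ring

end Measure

section Gaussian

open ProbabilityTheory

variable {n : ℕ}

theorem gaussianDensity_pos {S : Matrix (Fin n) (Fin n) ℝ} (hS : 0 < S.det) (μ x : Fin n → ℝ) :
    0 < gaussianDensity μ S x := by
  unfold gaussianDensity
  positivity

theorem measurable_gaussianDensity (μ : Fin n → ℝ) (S : Matrix (Fin n) (Fin n) ℝ) :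
    Measurable (gaussianDensity μ S) := by
  unfold gaussianDensity
  fun_prop

theorem log_gaussianDensity {S : Matrix (Fin n) (Fin n) ℝ} (hS : 0 < S.det) (μ x : Fin n → ℝ) :
    Real.log (gaussianDensity μ S x) =
      -(n : ℝ) / 2 * Real.log (2 * Real.pi) - Real.log S.det / 2 -
        (x - μ) ⬝ᵥ (S⁻¹ *ᵥ (x - μ)) / 2 := by
  rw [gaussianDensity, Real.log_mul (by positivity) (Real.exp_ne_zero _),
    Real.log_mul (by positivity) (by positivity), Real.log_exp,
    Real.log_rpow (by positivity), Real.log_rpow hS]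
  ring

theorem abs_det_mul_gaussianDensity {T : Matrix (Fin n) (Fin n) ℝ} (hT : IsUnit T.det)
    (μ z : Fin n → ℝ) :
    |T.det| * gaussianDensity μ (T * Tᵀ) (T *ᵥ z + μ) = ∏ i, gaussianPDFReal 0 1 (z i) := by
  have hdet : (T * Tᵀ).det ^ (-(1 : ℝ) / 2) = |T.det|⁻¹ := by
    rw [det_mul, det_transpose, ← abs_mul_abs_self, ← pow_two, neg_div,
      Real.rpow_neg (by positivity), ← Real.sqrt_eq_rpow, Real.sqrt_sq (abs_nonneg _)]
  have hconst : (2 * Real.pi) ^ (-(n : ℝ) / 2) = (√(2 * Real.pi))⁻¹ ^ n := by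
    rw [Real.sqrt_eq_rpow, ← Real.rpow_neg (by positivity), ← Real.rpow_natCast,
      ← Real.rpow_mul (by positivity)]
    congr 1
    ring
  have hquad : (T *ᵥ z) ⬝ᵥ ((T * Tᵀ)⁻¹ *ᵥ (T *ᵥ z)) = ∑ i, z i ^ 2 := by
    rw [(simDiag_self hT).dotProduct_inv_left_mulVec, (simDiag_self hT).inv_mulVec_mulVec]
  have hpdf (i : Fin n) :
      gaussianPDFReal 0 1 (z i) = (√(2 * Real.pi))⁻¹ * Real.exp (-(1 / 2) * z i ^ 2) := by
    simp only [gaussianPDFReal, NNReal.coe_one, mul_one, sub_zero]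
    congr 2
    ring
  simp only [hpdf, Finset.prod_mul_distrib, Finset.prod_const, Finset.card_univ, Fintype.card_fin,
    ← Real.exp_sum, ← Finset.mul_sum]
  rw [gaussianDensity, add_sub_cancel_right, hdet, hconst, hquad]
  field_simp [abs_ne_zero.mpr hT.ne_zero]

theorem gaussianMeasure_mul_transpose {T : Matrix (Fin n) (Fin n) ℝ} (hT : IsUnit T.det)
    (μ : Fin n → ℝ) :
    gaussianMeasure μ (T * Tᵀ) =
      (Measure.pi fun _ => gaussianReal 0 1).map fun z => T *ᵥ z + μ := by
  have hT0 : |T.det| ≠ 0 := abs_ne_zero.mpr hT.ne_zero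
  have hdensity := (measurable_gaussianDensity μ (T * Tᵀ)).ennreal_ofReal
  have hpi : (Measure.pi fun _ : Fin n => gaussianReal 0 1) = volume.withDensity
      ((ENNReal.ofReal |T.det| • fun x => ENNReal.ofReal (gaussianDensity μ (T * Tᵀ) x)) ∘
        fun z => T *ᵥ z + μ) := by
    rw [gaussianReal_of_var_ne_zero 0 one_ne_zero]
    refine (pi_withDensity_ofReal _ (fun _ => gaussianPDFReal_nonneg 0 1)
      fun _ => integrable_gaussianPDFReal 0 1).trans (congrArg _ (funext fun z => ?_))
    rw [← abs_det_mul_gaussianDensity hT μ z, ENNReal.ofReal_mul (abs_nonneg _)]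
    rfl
  rw [hpi, map_withDensity_comp _ (by fun_prop) (hdensity.const_smul _),
    map_mulVec_add_volume hT.ne_zero, withDensity_smul_measure, withDensity_smul _ hdensity,
    smul_smul, ← ENNReal.ofReal_mul (abs_nonneg _), abs_inv, inv_mul_cancel₀ hT0,
    ENNReal.ofReal_one, one_smul]
  rfl

theorem isProbabilityMeasure_gaussianMeasure {S : Matrix (Fin n) (Fin n) ℝ} (hS : S.PosDef)
    (μ : Fin n → ℝ) : IsProbabilityMeasure (gaussianMeasure μ S) := by
  obtain ⟨T, hT, rfl⟩ := exists_isUnit_det_eq_mul_transpose hS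
  rw [gaussianMeasure_mul_transpose hT]
  exact Measure.isProbabilityMeasure_map (by fun_prop)

theorem SimDiag.log_gaussianDensity_div {A B T : Matrix (Fin n) (Fin n) ℝ} {σ : Fin n → ℝ}
    (h : SimDiag A B T σ) (μ z : Fin n → ℝ) :
    Real.log (gaussianDensity μ A (T *ᵥ z + μ) / gaussianDensity μ B (T *ᵥ z + μ)) =
      ∑ i, ((σ i - 1) / 2 * z i ^ 2 - Real.log (σ i) / 2) := by
  have hA := h.left.posDef_right.det_pos
  have hB := h.posDef_right.det_pos
  have hlogdet : Real.log B.det = Real.log A.det - ∑ i, Real.log (σ i) := by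
    rw [h.det_right, Real.log_div hA.ne' (Finset.prod_pos fun i _ => h.pos i).ne',
      Real.log_prod fun i _ => (h.pos i).ne']
  rw [Real.log_div (gaussianDensity_pos hA _ _).ne' (gaussianDensity_pos hB _ _).ne',
    log_gaussianDensity hA, log_gaussianDensity hB, add_sub_cancel_right,
    h.dotProduct_inv_left_mulVec, h.dotProduct_inv_right_mulVec, h.inv_mulVec_mulVec, hlogdet]
  simp only [sub_div, sub_mul, Finset.sum_sub_distrib, ← Finset.sum_div, div_mul_eq_mul_div,
    one_mul]
  ring

theorem SimDiag.integral_comp_log_gaussianDensity_div {A B T : Matrix (Fin n) (Fin n) ℝ}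
    {σ : Fin n → ℝ} (h : SimDiag A B T σ) (μ : Fin n → ℝ) {F : ℝ → ℝ} (hF : Measurable F) :
    ∫ x, F (Real.log (gaussianDensity μ A x / gaussianDensity μ B x)) ∂gaussianMeasure μ A =
      ∫ z, F (∑ i, ((σ i - 1) / 2 * z i ^ 2 - Real.log (σ i) / 2))
        ∂Measure.pi fun _ => gaussianReal 0 1 := by
  have hmeas : Measurable fun x =>
      F (Real.log (gaussianDensity μ A x / gaussianDensity μ B x)) :=
    hF.comp ((measurable_gaussianDensity μ A).div (measurable_gaussianDensity μ B)).log
  have hmap : gaussianMeasure μ A =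
      (Measure.pi fun _ => gaussianReal 0 1).map fun z => T *ᵥ z + μ := by
    rw [h.left_eq, gaussianMeasure_mul_transpose h.isUnit_det]
  rw [hmap, integral_map (by fun_prop) hmeas.aestronglyMeasurable]
  simp only [h.log_gaussianDensity_div]

theorem integrable_sq_gaussianReal : Integrable (fun z => z ^ 2) (gaussianReal 0 1) :=
  (memLp_id_gaussianReal 2).integrable_sq

theorem integral_sq_gaussianReal : ∫ z, z ^ 2 ∂gaussianReal 0 1 = 1 := by
  have hvar := variance_id_gaussianReal (μ := 0) (v := 1)
  rwa [variance_of_integral_eq_zero aemeasurable_id integral_id_gaussianReal] at hvar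

theorem integral_exp_neg_mul_sq_gaussianReal (c : ℝ) :
    ∫ z, Real.exp (-c * z ^ 2) ∂gaussianReal 0 1 = (√(1 + 2 * c))⁻¹ := by
  have hpdf (z : ℝ) : gaussianPDFReal 0 1 z • Real.exp (-c * z ^ 2) =
      (√(2 * Real.pi))⁻¹ * Real.exp (-(1 / 2 + c) * z ^ 2) := by
    simp only [gaussianPDFReal, NNReal.coe_one, mul_one, sub_zero, smul_eq_mul, mul_assoc,
      ← Real.exp_add]
    ring_nf
  simp only [integral_gaussianReal_eq_integral_smul one_ne_zero, hpdf, integral_const_mul,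
    integral_gaussian]
  rw [← Real.sqrt_inv, ← Real.sqrt_mul (by positivity), ← Real.sqrt_inv]
  congr 1
  rw [show 1 + 2 * c = 2 * (1 / 2 + c) by ring]
  field_simp

/-- The univariate Kullback–Leibler loss `D_KL(N(0, σ) ‖ N(0, 1))`. -/
noncomputable def klLoss (σ : ℝ) : ℝ := (σ - 1) / 2 - Real.log σ / 2

/-- The univariate Hellinger loss: minus the logarithm of the affinity `∫ √(p q)` of the densities
`p`, `q` of `N(0, σ)` and `N(0, 1)`. -/
noncomputable def hellingerLoss (σ : ℝ) : ℝ := Real.log ((1 + σ) / 2) / 2 - Real.log σ / 4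

theorem isStrictValley_klLoss : IsStrictValley klLoss := by
  refine isStrictValley_of_hasDerivAt (f' := fun x => 1 / 2 - x⁻¹ / 2) (fun x hx => ?_)
    fun x hx hx1 => ?_
  · exact (((hasDerivAt_id x).sub_const 1).div_const 2).sub
      ((Real.hasDerivAt_log (ne_of_gt hx)).div_const 2)
  · have hx0 : 0 < x := hx
    have h1x : 1 - x ≠ 0 := sub_ne_zero.mpr hx1.symm
    calc (1 / 2 - x⁻¹ / 2) * (1 - x) = -((1 - x) ^ 2 / (2 * x)) := by field_simp; ring
      _ < 0 := neg_lt_zero.mpr (by positivity)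

theorem isStrictValley_hellingerLoss : IsStrictValley hellingerLoss := by
  refine isStrictValley_of_hasDerivAt (f' := fun x => (1 / 2) / ((1 + x) / 2) / 2 - x⁻¹ / 4)
    (fun x hx => ?_) fun x hx hx1 => ?_
  · have hx0 : 0 < x := hx
    exact (((((hasDerivAt_id x).const_add 1).div_const 2).log (by simp only [id]; positivity)
      ).div_const 2).sub ((Real.hasDerivAt_log hx0.ne').div_const 4)
  · have hx0 : 0 < x := hx
    have h1x : 1 - x ≠ 0 := sub_ne_zero.mpr hx1.symm
    calc ((1 / 2) / ((1 + x) / 2) / 2 - x⁻¹ / 4) * (1 - x)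
        = -((1 - x) ^ 2 / (4 * x * (1 + x))) := by field_simp; ring
      _ < 0 := neg_lt_zero.mpr (by positivity)

theorem integral_sum_pi_gaussianReal {ι : Type*} [Fintype ι] (σ : ι → ℝ) :
    ∫ z, ∑ i, ((σ i - 1) / 2 * z i ^ 2 - Real.log (σ i) / 2)
      ∂Measure.pi (fun _ => gaussianReal 0 1) = ∑ i, klLoss (σ i) := by
  let g (i : ι) (z : ℝ) : ℝ := (σ i - 1) / 2 * z ^ 2 - Real.log (σ i) / 2
  have hg (i : ι) : Integrable (g i) (gaussianReal 0 1) :=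
    (integrable_sq_gaussianReal.const_mul _).sub (integrable_const _)
  calc ∫ z, ∑ i, g i (z i) ∂Measure.pi (fun _ => gaussianReal 0 1)
      = ∑ i, ∫ z, g i (z i) ∂Measure.pi (fun _ => gaussianReal 0 1) :=
        integral_finsetSum _ fun i _ =>
          integrable_comp_eval (μ := fun _ => gaussianReal 0 1) (f := g i) (hg i)
    _ = ∑ i, ∫ z, g i z ∂gaussianReal 0 1 :=
        Finset.sum_congr rfl fun i _ => integral_comp_eval (μ := fun _ => gaussianReal 0 1)
          (f := g i) (hg i).aestronglyMeasurable
    _ = ∑ i, klLoss (σ i) := Finset.sum_congr rfl fun i _ => by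
        rw [integral_sub (integrable_sq_gaussianReal.const_mul _) (integrable_const _),
          integral_const_mul, integral_sq_gaussianReal, integral_const, probReal_univ, one_smul,
          mul_one, klLoss]

theorem exp_neg_hellingerLoss {σ : ℝ} (hσ : 0 < σ) :
    Real.exp (Real.log σ / 4) * (√((1 + σ) / 2))⁻¹ = Real.exp (-hellingerLoss σ) := by
  have hsqrt : √((1 + σ) / 2) = Real.exp (Real.log ((1 + σ) / 2) / 2) := by
    rw [Real.exp_half, Real.exp_log (by positivity)]
  rw [hsqrt, ← Real.exp_neg, ← Real.exp_add, hellingerLoss]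
  congr 1
  ring

theorem integral_exp_neg_half_sum_pi_gaussianReal {ι : Type*} [Fintype ι] {σ : ι → ℝ}
    (hσ : ∀ i, 0 < σ i) :
    ∫ z, Real.exp (-(∑ i, ((σ i - 1) / 2 * z i ^ 2 - Real.log (σ i) / 2)) / 2)
      ∂Measure.pi (fun _ => gaussianReal 0 1) = Real.exp (-∑ i, hellingerLoss (σ i)) := by
  have hexp (z : ι → ℝ) :
      Real.exp (-(∑ i, ((σ i - 1) / 2 * z i ^ 2 - Real.log (σ i) / 2)) / 2) =
        ∏ i, Real.exp (Real.log (σ i) / 4) * Real.exp (-((σ i - 1) / 4) * z i ^ 2) := by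
    simp only [← Real.exp_add, ← Real.exp_sum, ← Finset.sum_neg_distrib, Finset.sum_div]
    congr 1
    exact Finset.sum_congr rfl fun i _ => by ring
  simp only [hexp]
  rw [integral_fintype_prod_eq_prod
      fun i z => Real.exp (Real.log (σ i) / 4) * Real.exp (-((σ i - 1) / 4) * z ^ 2),
    ← Finset.sum_neg_distrib, Real.exp_sum]
  refine Finset.prod_congr rfl fun i _ => ?_
  rw [integral_const_mul, integral_exp_neg_mul_sq_gaussianReal,
    show 1 + 2 * ((σ i - 1) / 4) = (1 + σ i) / 2 by ring, exp_neg_hellingerLoss (hσ i)]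

theorem klDiv'_gaussianMeasure {A B : Matrix (Fin n) (Fin n) ℝ} (hA : A.PosDef) (hB : B.PosDef)
    (μ : Fin n → ℝ) :
    klDiv' (gaussianMeasure μ A) (gaussianMeasure μ B) = spectralLoss klLoss A B := by
  obtain ⟨T, σ, h⟩ := exists_simDiag hA hB
  calc klDiv' (gaussianMeasure μ A) (gaussianMeasure μ B)
      = ∫ x, Real.log (gaussianDensity μ A x / gaussianDensity μ B x) ∂gaussianMeasure μ A :=
        klDiv'_withDensity_ofReal (measurable_gaussianDensity μ A) (measurable_gaussianDensity μ B)
          (gaussianDensity_pos hA.det_pos μ) (gaussianDensity_pos hB.det_pos μ)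
    _ = ∑ i, klLoss (σ i) :=
        (h.integral_comp_log_gaussianDensity_div μ measurable_id).trans
          (integral_sum_pi_gaussianReal σ)
    _ = spectralLoss klLoss A B := (h.isGenEigs.spectralLoss_eq klLoss).symm

theorem sqHellinger_gaussianMeasure {A B : Matrix (Fin n) (Fin n) ℝ} (hA : A.PosDef)
    (hB : B.PosDef) (μ : Fin n → ℝ) :
    sqHellinger (gaussianMeasure μ A) (gaussianMeasure μ B) =
      1 - Real.exp (-spectralLoss hellingerLoss A B) := by
  obtain ⟨T, σ, h⟩ := exists_simDiag hA hB
  have hpA := gaussianDensity_pos hA.det_pos μ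
  have hpB := gaussianDensity_pos hB.det_pos μ
  have := isProbabilityMeasure_gaussianMeasure hA μ
  have := isProbabilityMeasure_gaussianMeasure hB μ
  unfold gaussianMeasure at *
  rw [sqHellinger_withDensity_ofReal (measurable_gaussianDensity μ A)
    (measurable_gaussianDensity μ B) hpA hpB, h.isGenEigs.spectralLoss_eq,
    ← integral_exp_neg_half_sum_pi_gaussianReal h.pos]
  have hsqrt (x : Fin n → ℝ) : √(gaussianDensity μ B x / gaussianDensity μ A x) =
      Real.exp (-Real.log (gaussianDensity μ A x / gaussianDensity μ B x) / 2) := by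
    rw [Real.exp_half, Real.exp_neg, Real.exp_log (div_pos (hpA x) (hpB x)), inv_div]
  simp only [hsqrt]
  congr 1
  exact h.integral_comp_log_gaussianDensity_div μ (F := fun t => Real.exp (-t / 2)) (by fun_prop)

theorem sqHellinger_nonneg (ν₁ ν₂ : Measure (Fin n → ℝ)) : 0 ≤ sqHellinger ν₁ ν₂ :=
  mul_nonneg one_half_pos.le (integral_nonneg fun _ => sq_nonneg _)

theorem sqrt_sqHellinger_gaussianMeasure_le_iff {A B C : Matrix (Fin n) (Fin n) ℝ}
    (hA : A.PosDef) (hB : B.PosDef) (hC : C.PosDef) (μ : Fin n → ℝ) :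
    √(sqHellinger (gaussianMeasure μ A) (gaussianMeasure μ B)) ≤
        √(sqHellinger (gaussianMeasure μ A) (gaussianMeasure μ C)) ↔
      spectralLoss hellingerLoss A B ≤ spectralLoss hellingerLoss A C := by
  rw [Real.sqrt_le_sqrt_iff (sqHellinger_nonneg _ _), sqHellinger_gaussianMeasure hA hB,
    sqHellinger_gaussianMeasure hA hC, sub_le_sub_iff_left, Real.exp_le_exp, neg_le_neg_iff]

end Gaussian

theorem equivalence_of_approximations_general {n r : ℕ} {H Γpr Γpos : Matrix (Fin n) (Fin n) ℝ}
    (hH : H.PosSemidef) (hpr : Γpr.PosDef) (hΓpos : Γpos = (H + Γpr⁻¹)⁻¹)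
    {f : ℝ → ℝ} (hf : IsStrictValley f) (μ : Fin n → ℝ)
    {Γhat : Matrix (Fin n) (Fin n) ℝ} (hΓhat : Γhat ∈ MClass Γpr r) :
    ((∀ Γt ∈ MClass Γpr r,
        klDiv' (gaussianMeasure μ Γpos) (gaussianMeasure μ Γhat) ≤
          klDiv' (gaussianMeasure μ Γpos) (gaussianMeasure μ Γt)) ↔
      (∀ Γt ∈ MClass Γpr r, ∀ σ σ' : Fin n → ℝ,
        IsGenEigs Γpos Γhat σ → IsGenEigs Γpos Γt σ' →
        ∑ i, f (σ i) ≤ ∑ i, f (σ' i))) ∧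
    ((∀ Γt ∈ MClass Γpr r,
        Real.sqrt (sqHellinger (gaussianMeasure μ Γpos) (gaussianMeasure μ Γhat)) ≤
          Real.sqrt (sqHellinger (gaussianMeasure μ Γpos) (gaussianMeasure μ Γt))) ↔
      (∀ Γt ∈ MClass Γpr r, ∀ σ σ' : Fin n → ℝ,
        IsGenEigs Γpos Γhat σ → IsGenEigs Γpos Γt σ' →
        ∑ i, f (σ i) ≤ ∑ i, f (σ' i))) := by
  have hprec : (H + Γpr⁻¹).PosDef := PosDef.posSemidef_add hH hpr.inv
  have hpos : Γpos.PosDef := hΓpos ▸ hprec.inv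
  have hdiff : (Γpos⁻¹ - Γpr⁻¹).PosSemidef := by
    rwa [hΓpos, nonsing_inv_nonsing_inv _ hprec.det_pos.ne'.isUnit, add_sub_cancel_right]
  have hhat := posDef_of_mem_MClass hΓhat
  rw [← isMinOn_spectralLoss_iff_forall_isGenEigs hpos f hΓhat]
  constructor
  · rw [isMinOn_spectralLoss_congr hpos hpr hdiff hf isStrictValley_klLoss hΓhat, isMinOn_iff]
    refine forall₂_congr fun Γt hΓt => ?_
    rw [klDiv'_gaussianMeasure hpos hhat, klDiv'_gaussianMeasure hpos (posDef_of_mem_MClass hΓt)]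
  · rw [isMinOn_spectralLoss_congr hpos hpr hdiff hf isStrictValley_hellingerLoss hΓhat,
      isMinOn_iff]
    exact forall₂_congr fun Γt hΓt =>
      sqrt_sqHellinger_gaussianMeasure_le_iff hpos hhat (posDef_of_mem_MClass hΓt) μ

/-- Lemma 2.2 (equivalence of approximations): `Γ̂ ∈ 𝓜_r` minimizes the K-L divergence
(resp. the Hellinger distance) between `N(μ, Γpos)` and `N(μ, Γ̂)` over `𝓜_r` iff it
minimizes the loss `L(Γpos, ·)` over `𝓜_r`. -/
theorem equivalence_of_approximations
    (n m r : ℕ) (hn : 0 < n) (hm : 0 < m) (hr : r ≤ n)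
    (G : Matrix (Fin m) (Fin n) ℝ)
    (Γobs : Matrix (Fin m) (Fin m) ℝ) (hobs : Γobs.PosDef)
    (Γpr : Matrix (Fin n) (Fin n) ℝ) (hpr : Γpr.PosDef)
    (H Γpos : Matrix (Fin n) (Fin n) ℝ)
    (hH : H = Gᵀ * Γobs⁻¹ * G)
    (hΓpos : Γpos = (H + Γpr⁻¹)⁻¹)
    (f : ℝ → ℝ) (hf : MemU f)
    (μ : Fin n → ℝ)
    (Γhat : Matrix (Fin n) (Fin n) ℝ) (hΓhat : Γhat ∈ MClass Γpr r) :
    ((∀ Γt ∈ MClass Γpr r,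
        klDiv' (gaussianMeasure μ Γpos) (gaussianMeasure μ Γhat) ≤
          klDiv' (gaussianMeasure μ Γpos) (gaussianMeasure μ Γt)) ↔
      (∀ Γt ∈ MClass Γpr r, ∀ σ σ' : Fin n → ℝ,
        IsGenEigs Γpos Γhat σ → IsGenEigs Γpos Γt σ' →
        ∑ i, f (σ i) ≤ ∑ i, f (σ' i))) ∧
    ((∀ Γt ∈ MClass Γpr r,
        Real.sqrt (sqHellinger (gaussianMeasure μ Γpos) (gaussianMeasure μ Γhat)) ≤
          Real.sqrt (sqHellinger (gaussianMeasure μ Γpos) (gaussianMeasure μ Γt))) ↔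
      (∀ Γt ∈ MClass Γpr r, ∀ σ σ' : Fin n → ℝ,
        IsGenEigs Γpos Γhat σ → IsGenEigs Γpos Γt σ' →
        ∑ i, f (σ i) ≤ ∑ i, f (σ' i))) := by
  have hHpos : H.PosSemidef := by
    simpa only [hH, conjTranspose_eq_transpose_of_trivial] using
      hobs.inv.posSemidef.conjTranspose_mul_mul_same G
  exact equivalence_of_approximations_general hHpos hpr hΓpos hf.isStrictValley μ hΓhat
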